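/- arXiv:1805.11706 — 5 statements merged into one kernel-verified Lean document; each statement's English description precedes it below -/
import Mathlib

section
/- Let λ > 0 and for each s ∈ 𝒮 define Z_λ(s) = Σ_a q(a|s) e^{A(s,a)/λ} and π^λ(a|s) = q(a|s) e^{A(s,a)/λ} / Z_λ(s). Let Γ^λ = { s ∈ 𝒮 : KL(π^λ(·|s) ‖ q(·|s)) ≤ ε }. Suppose that for every s ∉ Γ^λ there exists λ_s ≥ λ with KL(π^{λ_s}(·|s) ‖ q(·|s)) = ε, where π^{λ_s}(a|s) = q(a|s) e^{A(s,a)/λ_s} / Z_{λ_s}(s). Define the policy π̃ by π̃(·|s) = π^λ(·|s) for s ∈ Γ^λ and π̃(·|s) = π^{λ_s}(·|s) for s ∉ Γ^λ, and suppose Σ_s d(s) · KL(π̃(·|s) ‖ q(·|s)) = δ. Then π̃ is optimal for the constrained problem: for every policy π satisfying Σ_s d(s) · KL(π(·|s) ‖ q(·|s)) ≤ δ and KL(π(·|s) ‖ q(·|s)) ≤ ε for all s ∈ 𝒮, one has Σ_s d(s) Σ_a π(a|s) A(s,a) ≤ Σ_s d(s) Σ_a π̃(a|s) A(s,a). -/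
/-- KL divergence between two distributions on a finite action space,
with the convention `0 * log 0 = 0` (automatic in Lean). -/
noncomputable def KL {A : Type*} [Fintype A] (p q : A → ℝ) : ℝ :=
  ∑ a, p a * Real.log (p a / q a)

/-- Normalization constant `Z_λ(s) = ∑_a q(a|s) e^{A(s,a)/λ}`. -/
noncomputable def Zfun {S A : Type*} [Fintype A] (q : S → A → ℝ) (Adv : S → A → ℝ)
    (lam : ℝ) (s : S) : ℝ :=
  ∑ a, q s a * Real.exp (Adv s a / lam)

/-- The exponentially tilted policy `π^λ(a|s) = q(a|s) e^{A(s,a)/λ} / Z_λ(s)`. -/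
noncomputable def piLam {S A : Type*} [Fintype A] (q : S → A → ℝ) (Adv : S → A → ℝ)
    (lam : ℝ) (s : S) (a : A) : ℝ :=
  q s a * Real.exp (Adv s a / lam) / Zfun q Adv lam s

/-!
At each state, every policy `p` satisfies
`∑ p A - ∑ π^λ A = λ (KL(p ‖ q) - KL(π^λ ‖ q) - KL(p ‖ π^λ))`, so Gibbs' inequality bounds the
advantage gained over `π^λ` by `λ` times the extra divergence spent. Where the state constraint
binds, no admissible policy spends extra divergence, so the larger multiplier `λ_s` may be lowered
to `λ`. With a common multiplier, averaging over the states leaves `λ` times the excess in the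
aggregated constraint, which is nonpositive.
-/

section KL

variable {A : Type*} [Fintype A] {p r : A → ℝ}

theorem KL_self (p : A → ℝ) : KL p p = 0 := by
  refine Finset.sum_eq_zero fun a _ => ?_
  rcases eq_or_ne (p a) 0 with ha | ha
  · rw [ha, zero_mul]
  · rw [div_self ha, Real.log_one, mul_zero]

theorem KL_eq_sum_klFun (hr : ∀ a, r a ≠ 0) :
    KL p r = ∑ a, r a * InformationTheory.klFun (p a / r a) + (∑ a, p a - ∑ a, r a) := by
  rw [KL, ← Finset.sum_sub_distrib, ← Finset.sum_add_distrib]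
  refine Finset.sum_congr rfl fun a _ => ?_
  rw [InformationTheory.klFun_apply]
  field_simp [hr a]
  ring

theorem KL_nonneg (hp : ∀ a, 0 ≤ p a) (hr : ∀ a, 0 < r a) (hsum : ∑ a, r a ≤ ∑ a, p a) :
    0 ≤ KL p r := by
  rw [KL_eq_sum_klFun fun a => (hr a).ne']
  exact add_nonneg
    (Finset.sum_nonneg fun a _ => mul_nonneg (hr a).le
      (InformationTheory.klFun_nonneg (div_nonneg (hp a) (hr a).le)))
    (sub_nonneg.mpr hsum)

end KL

section Tilt

variable {S A : Type*} [Fintype A] [Nonempty A] {q : S → A → ℝ} {s : S}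

theorem Zfun_pos (hq : ∀ a, 0 < q s a) (Adv : S → A → ℝ) (lam : ℝ) : 0 < Zfun q Adv lam s :=
  Finset.sum_pos (fun a _ => mul_pos (hq a) (Real.exp_pos _)) Finset.univ_nonempty

theorem piLam_pos (hq : ∀ a, 0 < q s a) (Adv : S → A → ℝ) (lam : ℝ) (a : A) :
    0 < piLam q Adv lam s a :=
  div_pos (mul_pos (hq a) (Real.exp_pos _)) (Zfun_pos hq Adv lam)

theorem sum_piLam (hq : ∀ a, 0 < q s a) (Adv : S → A → ℝ) (lam : ℝ) :
    ∑ a, piLam q Adv lam s a = 1 := by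
  simp only [piLam, ← Finset.sum_div]
  exact div_self (Zfun_pos hq Adv lam).ne'

theorem KL_piLam_right (hq : ∀ a, 0 < q s a) (Adv : S → A → ℝ) (lam : ℝ) (p : A → ℝ) :
    KL p (piLam q Adv lam s) =
      KL p (q s) - (∑ a, p a * Adv s a) / lam + (∑ a, p a) * Real.log (Zfun q Adv lam s) := by
  have hZ := (Zfun_pos hq Adv lam).ne'
  rw [KL, KL, Finset.sum_div, Finset.sum_mul, ← Finset.sum_sub_distrib, ← Finset.sum_add_distrib]
  refine Finset.sum_congr rfl fun a _ => ?_
  rcases eq_or_ne (p a) 0 with hpa | hpa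
  · simp only [hpa, zero_mul, zero_div, sub_zero, add_zero]
  · have hqa := (hq a).ne'
    have hexp := Real.exp_ne_zero (Adv s a / lam)
    rw [Real.log_div hpa (piLam_pos hq Adv lam a).ne', piLam,
      Real.log_div (mul_ne_zero hqa hexp) hZ, Real.log_mul hqa hexp, Real.log_exp,
      Real.log_div hpa hqa]
    ring

theorem sum_mul_sub_sum_piLam_mul (hq : ∀ a, 0 < q s a) (Adv : S → A → ℝ) {lam : ℝ}
    (hlam : lam ≠ 0) {p : A → ℝ} (hp : ∑ a, p a = 1) :
    ∑ a, p a * Adv s a - ∑ a, piLam q Adv lam s a * Adv s a =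
      lam * (KL p (q s) - KL (piLam q Adv lam s) (q s) - KL p (piLam q Adv lam s)) := by
  have hright := KL_piLam_right hq Adv lam p
  have hself := KL_piLam_right hq Adv lam (piLam q Adv lam s)
  rw [hp] at hright
  rw [KL_self, sum_piLam hq] at hself
  field_simp at hright hself
  linarith

theorem sum_mul_sub_sum_piLam_mul_le (hq : ∀ a, 0 < q s a) (Adv : S → A → ℝ) {lam : ℝ}
    (hlam : 0 < lam) {p : A → ℝ} (hp_nonneg : ∀ a, 0 ≤ p a) (hp : ∑ a, p a = 1) :
    ∑ a, p a * Adv s a - ∑ a, piLam q Adv lam s a * Adv s a ≤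
      lam * (KL p (q s) - KL (piLam q Adv lam s) (q s)) := by
  have hsum : ∑ a, piLam q Adv lam s a ≤ ∑ a, p a := ((sum_piLam hq Adv lam).trans hp.symm).le
  rw [sum_mul_sub_sum_piLam_mul hq Adv hlam.ne' hp]
  exact mul_le_mul_of_nonneg_left
    (sub_le_self _ (KL_nonneg hp_nonneg (piLam_pos hq Adv lam) hsum)) hlam.le

end Tilt

/-- Weak Lagrangian duality: `c` is the multiplier of the aggregated constraint. -/
theorem sum_mul_le_sum_mul_of_sub_le_mul_sub {ι R : Type*} [CommRing R] [PartialOrder R]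
    [IsOrderedRing R] {t : Finset ι} {w f g k l : ι → R} {c : R}
    (hw : ∀ i ∈ t, 0 ≤ w i) (hc : 0 ≤ c)
    (hfg : ∀ i ∈ t, f i - g i ≤ c * (k i - l i))
    (hkl : ∑ i ∈ t, w i * k i ≤ ∑ i ∈ t, w i * l i) :
    ∑ i ∈ t, w i * f i ≤ ∑ i ∈ t, w i * g i := by
  refine sub_nonpos.mp ?_
  calc
    ∑ i ∈ t, w i * f i - ∑ i ∈ t, w i * g i = ∑ i ∈ t, w i * (f i - g i) := by
      simp only [mul_sub, Finset.sum_sub_distrib]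
    _ ≤ ∑ i ∈ t, w i * (c * (k i - l i)) :=
      Finset.sum_le_sum fun i hi => mul_le_mul_of_nonneg_left (hfg i hi) (hw i hi)
    _ = c * (∑ i ∈ t, w i * k i - ∑ i ∈ t, w i * l i) := by
      simp only [mul_left_comm (w _) c, ← Finset.mul_sum, mul_sub, Finset.sum_sub_distrib]
    _ ≤ 0 := mul_nonpos_of_nonneg_of_nonpos hc (sub_nonpos.mpr hkl)

/-- Theorem 1 (forward-KL, aggregated and disaggregated constraints): the policy `π̃`
which equals `π^λ` on `Γ^λ = {s : KL(π^λ(·|s) ‖ q(·|s)) ≤ ε}` and `π^{λ_s}` elsewhere,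
with the aggregated KL constraint binding, is optimal for the constrained problem. -/
theorem spu_forward_KL_optimal
    {S A : Type*} [Fintype S] [Fintype A] [Nonempty S] [Nonempty A]
    (q : S → A → ℝ) (hqpos : ∀ s a, 0 < q s a) (hqsum : ∀ s, ∑ a, q s a = 1)
    (d : S → ℝ) (hdpos : ∀ s, 0 < d s) (hdsum : ∑ s, d s = 1)
    (Adv : S → A → ℝ) (δ ε : ℝ) (hδ : 0 < δ) (hε : 0 < ε)
    (lam : ℝ) (hlam : 0 < lam)
    (lamS : S → ℝ)
    (hlamS : ∀ s, ε < KL (piLam q Adv lam s) (q s) →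
      lam ≤ lamS s ∧ KL (piLam q Adv (lamS s) s) (q s) = ε)
    (tpi : S → A → ℝ)
    (htpi : ∀ s, tpi s =
      if KL (piLam q Adv lam s) (q s) ≤ ε then piLam q Adv lam s
      else piLam q Adv (lamS s) s)
    (hbinding : ∑ s, d s * KL (tpi s) (q s) = δ) :
    ∀ pol : S → A → ℝ,
      (∀ s a, 0 ≤ pol s a) → (∀ s, ∑ a, pol s a = 1) →
      (∑ s, d s * KL (pol s) (q s) ≤ δ) →
      (∀ s, KL (pol s) (q s) ≤ ε) →
      ∑ s, d s * ∑ a, pol s a * Adv s a ≤ ∑ s, d s * ∑ a, tpi s a * Adv s a := by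
  intro pol hpol_nonneg hpol_sum hagg hdis
  have hgap : ∀ s, ∑ a, pol s a * Adv s a - ∑ a, tpi s a * Adv s a ≤
      lam * (KL (pol s) (q s) - KL (tpi s) (q s)) := by
    intro s
    by_cases hs : KL (piLam q Adv lam s) (q s) ≤ ε
    · rw [htpi s, if_pos hs]
      exact sum_mul_sub_sum_piLam_mul_le (hqpos s) Adv hlam (hpol_nonneg s) (hpol_sum s)
    · obtain ⟨hle, hKL⟩ := hlamS s (not_le.mp hs)
      rw [htpi s, if_neg hs]
      calc
        _ ≤ lamS s * (KL (pol s) (q s) - KL (piLam q Adv (lamS s) s) (q s)) :=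
          sum_mul_sub_sum_piLam_mul_le (hqpos s) Adv (hlam.trans_le hle) (hpol_nonneg s)
            (hpol_sum s)
        _ ≤ lam * (KL (pol s) (q s) - KL (piLam q Adv (lamS s) s) (q s)) :=
          mul_le_mul_of_nonpos_right hle (sub_nonpos.mpr ((hdis s).trans_eq hKL.symm))
  exact sum_mul_le_sum_mul_of_sub_le_mul_sub (fun s _ => (hdpos s).le) hlam.le
    (fun s _ => hgap s) (hagg.trans_eq hbinding.symm)
end

section
/- Suppose π* is a policy of the form π*(a|s) = q(a|s) · λ(s) / (λ'(s) − A(s,a)), where for each s ∈ 𝒮, λ(s) > 0 and λ'(s) > max_a A(s,a), each π*(·|s) is a probability distribution on 𝒜, and the reverse-KL constraint is binding: KL(q(·|s) ‖ π*(·|s)) = ε for every s ∈ 𝒮. Then π* is optimal for the backward-KL constrained problem: for every policy π with π(a|s) > 0 for all s, a and KL(q(·|s) ‖ π(·|s)) ≤ ε for all s ∈ 𝒮, one has Σ_s d(s) Σ_a π(a|s) A(s,a) ≤ Σ_s d(s) Σ_a π*(a|s) A(s,a). -/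
/-!
For fixed `q`, the function `p ↦ KL q p` is convex with gradient `-q / p`, and multiplying out the
formula for `π*` says that `λ' - A` equals `λ q / π*`, i.e. `-λ` times that gradient at `π*`. The
tangent-line inequality at `π*` therefore gives, for every feasible `π`,
`0 ≤ λ (KL q π* - KL q π) ≤ ∑ a, (π a - π* a) (λ' - A a)`, and the term in `λ'` cancels because
`π` and `π*` have the same mass.
-/

theorem mul_log_div_sub_mul_log_div_le {x y z : ℝ} (hx : 0 ≤ x) (hy : 0 < x → 0 < y)
    (hz : 0 < x → 0 < z) :
    x * Real.log (x / y) - x * Real.log (x / z) ≤ x / y * (z - y) := by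
  rcases hx.eq_or_lt with rfl | hx
  · simp
  have hy := hy hx
  have hz := hz hx
  calc x * Real.log (x / y) - x * Real.log (x / z) = x * Real.log (z / y) := by
        rw [Real.log_div hx.ne' hy.ne', Real.log_div hx.ne' hz.ne', Real.log_div hz.ne' hy.ne']
        ring
    _ ≤ x * (z / y - 1) :=
        mul_le_mul_of_nonneg_left (Real.log_le_sub_one_of_pos (div_pos hz hy)) hx.le
    _ = x / y * (z - y) := by field_simp

section KL

variable {A : Type*} [Fintype A] {q p p' : A → ℝ}

theorem KL_sub_KL_le_sum_div_mul_sub (hq : ∀ a, 0 ≤ q a) (hp : ∀ a, 0 < q a → 0 < p a)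
    (hp' : ∀ a, 0 < q a → 0 < p' a) :
    KL q p - KL q p' ≤ ∑ a, q a / p a * (p' a - p a) := by
  rw [KL, KL, ← Finset.sum_sub_distrib]
  exact Finset.sum_le_sum fun a _ ↦ mul_log_div_sub_mul_log_div_le (hq a) (hp a) (hp' a)

variable {f : A → ℝ} {l c : ℝ}

-- Stationarity is stated without division so that `p` may charge actions outside the support of
-- `q`; it then forces those actions to satisfy `f a = c`.
theorem mul_KL_sub_KL_le_sum_sub_mul_sub (hq : ∀ a, 0 ≤ q a) (hl : 0 < l) (hc : ∀ a, f a ≤ c)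
    (hstat : ∀ a, p a * (c - f a) = q a * l) (hp'_nonneg : ∀ a, 0 ≤ p' a)
    (hp' : ∀ a, 0 < q a → 0 < p' a) :
    l * (KL q p - KL q p') ≤ ∑ a, (p' a - p a) * (c - f a) := by
  have hp : ∀ a, 0 < q a → 0 < p a := fun a ha ↦
    pos_of_mul_pos_left (hstat a ▸ mul_pos ha hl) (sub_nonneg.2 (hc a))
  have gradient_le : ∀ a, l * (q a / p a * (p' a - p a)) ≤ (p' a - p a) * (c - f a) := by
    intro a
    rcases (hq a).eq_or_lt with hqa | hqa
    · have hpa : p a * (c - f a) = 0 := by rw [hstat, ← hqa, zero_mul]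
      rw [← hqa, zero_div, zero_mul, mul_zero, sub_mul, hpa, sub_zero]
      exact mul_nonneg (hp'_nonneg a) (sub_nonneg.2 (hc a))
    · have hgrad : q a / p a * l = c - f a := by
        rw [div_mul_eq_mul_div, ← hstat, mul_div_cancel_left₀ _ (hp a hqa).ne']
      rw [← hgrad]
      exact le_of_eq (by ring)
  calc l * (KL q p - KL q p') ≤ l * ∑ a, q a / p a * (p' a - p a) :=
        mul_le_mul_of_nonneg_left (KL_sub_KL_le_sum_div_mul_sub hq hp hp') hl.le
    _ = ∑ a, l * (q a / p a * (p' a - p a)) := Finset.mul_sum ..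
    _ ≤ ∑ a, (p' a - p a) * (c - f a) := Finset.sum_le_sum fun a _ ↦ gradient_le a

theorem sum_mul_le_sum_mul_of_KL_le_KL (hq : ∀ a, 0 ≤ q a) (hl : 0 < l) (hc : ∀ a, f a ≤ c)
    (hstat : ∀ a, p a * (c - f a) = q a * l) (hp'_nonneg : ∀ a, 0 ≤ p' a)
    (hp' : ∀ a, 0 < q a → 0 < p' a) (hsum : ∑ a, p' a = ∑ a, p a) (hKL : KL q p' ≤ KL q p) :
    ∑ a, p' a * f a ≤ ∑ a, p a * f a := by
  have hnonneg : 0 ≤ ∑ a, (p' a - p a) * (c - f a) :=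
    (mul_nonneg hl.le (sub_nonneg.2 hKL)).trans
      (mul_KL_sub_KL_le_sum_sub_mul_sub hq hl hc hstat hp'_nonneg hp')
  have hcancel : ∑ a, (p' a - p a) * (c - f a) = ∑ a, p a * f a - ∑ a, p' a * f a := by
    simp only [sub_mul, mul_sub, Finset.sum_sub_distrib, ← Finset.sum_mul, hsum]
    ring
  exact sub_nonneg.1 (hcancel ▸ hnonneg)

end KL

theorem spu_backward_KL_optimal_general {S A : Type*} [Fintype S] [Fintype A]
    {q pistar pol Adv : S → A → ℝ} {d lam lam' : S → ℝ}
    (hq : ∀ s a, 0 ≤ q s a) (hd : ∀ s, 0 ≤ d s)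
    (hlam : ∀ s, 0 < lam s) (hlam' : ∀ s a, Adv s a ≤ lam' s)
    (hpistar : ∀ s a, pistar s a * (lam' s - Adv s a) = q s a * lam s)
    (hpol_nonneg : ∀ s a, 0 ≤ pol s a) (hpol : ∀ s a, 0 < q s a → 0 < pol s a)
    (hsum : ∀ s, ∑ a, pol s a = ∑ a, pistar s a)
    (hKL : ∀ s, KL (q s) (pol s) ≤ KL (q s) (pistar s)) :
    ∑ s, d s * ∑ a, pol s a * Adv s a ≤ ∑ s, d s * ∑ a, pistar s a * Adv s a :=
  Finset.sum_le_sum fun s _ ↦ mul_le_mul_of_nonneg_left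
    (sum_mul_le_sum_mul_of_KL_le_KL (hq s) (hlam s) (hlam' s) (hpistar s) (hpol_nonneg s) (hpol s)
      (hsum s) (hKL s)) (hd s)

/-- Theorem 2 (backward/reverse KL disaggregated constraints): the policy
`π*(a|s) = q(a|s) · λ(s) / (λ'(s) − A(s,a))` with the reverse-KL constraint binding
is optimal for the backward-KL constrained problem. -/
theorem spu_backward_KL_optimal
    {S A : Type*} [Fintype S] [Fintype A] [Nonempty S] [Nonempty A]
    (q : S → A → ℝ) (hqpos : ∀ s a, 0 < q s a) (hqsum : ∀ s, ∑ a, q s a = 1)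
    (d : S → ℝ) (hdpos : ∀ s, 0 < d s) (hdsum : ∑ s, d s = 1)
    (Adv : S → A → ℝ) (ε : ℝ) (hε : 0 < ε)
    (lam lam' : S → ℝ) (hlam : ∀ s, 0 < lam s) (hlam' : ∀ s a, Adv s a < lam' s)
    (pistar : S → A → ℝ)
    (hpistar : ∀ s a, pistar s a = q s a * lam s / (lam' s - Adv s a))
    (hpistar_sum : ∀ s, ∑ a, pistar s a = 1)
    (hbinding : ∀ s, KL (q s) (pistar s) = ε) :
    ∀ pol : S → A → ℝ,
      (∀ s a, 0 < pol s a) → (∀ s, ∑ a, pol s a = 1) →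
      (∀ s, KL (q s) (pol s) ≤ ε) →
      ∑ s, d s * ∑ a, pol s a * Adv s a ≤ ∑ s, d s * ∑ a, pistar s a * Adv s a := by
  intro pol hpol hsum hKL
  have hstat : ∀ s a, pistar s a * (lam' s - Adv s a) = q s a * lam s := fun s a ↦ by
    rw [hpistar, div_mul_cancel₀ _ (sub_pos.2 (hlam' s a)).ne']
  exact spu_backward_KL_optimal_general (fun s a ↦ (hqpos s a).le) (fun s ↦ (hdpos s).le) hlam
    (fun s a ↦ (hlam' s a).le) hstat (fun s a ↦ (hpol s a).le) (fun s a _ ↦ hpol s a)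
    (fun s ↦ (hsum s).trans (hpistar_sum s).symm) (fun s ↦ (hKL s).trans_eq (hbinding s).symm)
end

section
/- Let λ > 0 and define, for i = 1, …, m: π*_i = q_i · min{1 + λ A_i, 1 + ε} if A_i ≥ 0, and π*_i = q_i · max{1 + λ A_i, 1 − ε} if A_i < 0. Suppose the aggregate constraint is binding: Σ_{i=1}^m ((π*_i − q_i)/q_i)² = δ. Then (π*_1, …, π*_m) is optimal for the L∞-constrained problem: for every (π_1, …, π_m) ∈ ℝ^m satisfying |π_i − q_i|/q_i ≤ ε for all i and Σ_{i=1}^m ((π_i − q_i)/q_i)² ≤ δ, one has Σ_{i=1}^m A_i · π_i/q_i ≤ Σ_{i=1}^m A_i · π*_i/q_i. -/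
/-!
In the coordinates `x i = (π i - q i) / q i` the objective is a constant plus `A ⬝ᵥ x`, and the
clipped solution becomes the nearest point `y` to `lam • A` in the cube `[-ε, ε]^m`. The
variational inequality `(lam • A - y) ⬝ᵥ (x - y) ≤ 0` of that projection gives
`lam * (A ⬝ᵥ (x - y)) ≤ y ⬝ᵥ (x - y) ≤ (x ⬝ᵥ x - y ⬝ᵥ y) / 2`, which is nonpositive as soon as the
quadratic constraint binds at `y`.
-/

section OrderedRing

variable {R : Type*} [CommRing R] [LinearOrder R] [IsStrictOrderedRing R]

lemma sub_clip_mul_sub_clip_nonpos {l u x : R} (hx : x ∈ Set.Icc l u) (t : R) :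
    (t - max l (min u t)) * (x - max l (min u t)) ≤ 0 := by
  have hlu : l ≤ u := hx.1.trans hx.2
  rcases le_total t l with htl | hlt
  · rw [min_eq_right (htl.trans hlu), max_eq_left htl]
    exact mul_nonpos_of_nonpos_of_nonneg (sub_nonpos.2 htl) (sub_nonneg.2 hx.1)
  rcases le_total t u with htu | hut
  · rw [min_eq_right htu, max_eq_right hlt, sub_self, zero_mul]
  · rw [min_eq_left hut, max_eq_right hlu]
    exact mul_nonpos_of_nonneg_of_nonpos (sub_nonneg.2 hut) (sub_nonpos.2 hx.2)

lemma ite_min_max_eq_clip {ε : R} (hε : 0 ≤ ε) (t : R) :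
    (if 0 ≤ t then min t ε else max t (-ε)) = max (-ε) (min ε t) := by
  have hneg : -ε ≤ 0 := neg_nonpos.2 hε
  split_ifs with ht
  · rw [min_comm, max_eq_right (hneg.trans (le_min hε ht))]
  · rw [min_eq_right ((not_le.1 ht).le.trans hε), max_comm]

lemma dotProduct_le_dotProduct_of_variational {ι : Type*} [Fintype ι] {a x y : ι → R} {lam : R}
    (hlam : 0 < lam) (hvar : (lam • a - y) ⬝ᵥ (x - y) ≤ 0) (hball : x ⬝ᵥ x ≤ y ⬝ᵥ y) :
    a ⬝ᵥ x ≤ a ⬝ᵥ y := by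
  have hsq : 0 ≤ (x - y) ⬝ᵥ (x - y) := Finset.sum_nonneg fun i _ => mul_self_nonneg _
  have hpolar : 2 * (lam * (a ⬝ᵥ x - a ⬝ᵥ y)) =
      2 * ((lam • a - y) ⬝ᵥ (x - y)) + (x ⬝ᵥ x - y ⬝ᵥ y) - (x - y) ⬝ᵥ (x - y) := by
    simp only [sub_dotProduct, dotProduct_sub, smul_dotProduct, smul_eq_mul, dotProduct_comm x y]
    ring
  have hlam_mul : lam * (a ⬝ᵥ x - a ⬝ᵥ y) ≤ 0 := by linarith
  exact sub_nonpos.1 (nonpos_of_mul_nonpos_right hlam_mul hlam)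

end OrderedRing

section OrderedField

variable {K : Type*} [Field K]

/-- The relative deviation `p / q - 1` of a new probability `p` from an old one `q`, in the form
`(p - q) / q` in which the constraints mention it. -/
def relDev (p q : K) : K := (p - q) / q

lemma sum_mul_div_eq_sum_add_dotProduct_relDev {ι : Type*} [Fintype ι] (A p : ι → K) {q : ι → K}
    (hq : ∀ i, q i ≠ 0) :
    ∑ i, A i * p i / q i = ∑ i, A i + A ⬝ᵥ fun i => relDev (p i) (q i) := by
  simp only [dotProduct, ← Finset.sum_add_distrib]
  refine Finset.sum_congr rfl fun i _ => ?_
  rw [relDev, sub_div, div_self (hq i)]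
  ring

variable [LinearOrder K] [IsStrictOrderedRing K]

lemma relDev_mem_Icc {p q ε : K} (hq : 0 < q) (h : |p - q| / q ≤ ε) :
    relDev p q ∈ Set.Icc (-ε) ε :=
  abs_le.1 (by rwa [relDev, abs_div, abs_of_pos hq])

lemma relDev_ite_min_max {q ε lam : K} (hq : q ≠ 0) (hε : 0 ≤ ε) (hlam : 0 < lam) (a : K) :
    relDev (if 0 ≤ a then q * min (1 + lam * a) (1 + ε) else q * max (1 + lam * a) (1 - ε)) q =
      max (-ε) (min ε (lam * a)) := by
  have hmul (s : K) : relDev (q * (1 + s)) q = s := by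
    rw [relDev]
    field_simp
    ring
  rw [← ite_min_max_eq_clip hε, sub_eq_add_neg 1 ε, min_add_add_left, max_add_add_left,
    apply_ite (relDev · q), hmul, hmul]
  simp only [mul_nonneg_iff_of_pos_left hlam]

theorem spu_Linf_optimal_general {ι : Type*} [Fintype ι] {A q : ι → K} (hq : ∀ i, 0 < q i)
    {ε lam : K} (hlam : 0 < lam) {pistar : ι → K}
    (hpistar : ∀ i, pistar i =
      if 0 ≤ A i then q i * min (1 + lam * A i) (1 + ε)
      else q i * max (1 + lam * A i) (1 - ε))
    {pol : ι → K} (hpol : ∀ i, |pol i - q i| / q i ≤ ε)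
    (hball : ∑ i, ((pol i - q i) / q i) ^ 2 ≤ ∑ i, ((pistar i - q i) / q i) ^ 2) :
    ∑ i, A i * pol i / q i ≤ ∑ i, A i * pistar i / q i := by
  have hq₀ (i : ι) : q i ≠ 0 := (hq i).ne'
  have hclip (i : ι) : relDev (pistar i) (q i) = max (-ε) (min ε (lam * A i)) := by
    have hε : 0 ≤ ε := (div_nonneg (abs_nonneg _) (hq i).le).trans (hpol i)
    rw [hpistar, relDev_ite_min_max (hq₀ i) hε hlam]
  rw [sum_mul_div_eq_sum_add_dotProduct_relDev A pol hq₀,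
    sum_mul_div_eq_sum_add_dotProduct_relDev A pistar hq₀]
  gcongr
  refine dotProduct_le_dotProduct_of_variational hlam (Finset.sum_nonpos fun i _ => ?_) ?_
  · simp only [Pi.sub_apply, Pi.smul_apply, smul_eq_mul, hclip]
    exact sub_clip_mul_sub_clip_nonpos (relDev_mem_Icc (hq i) (hpol i)) _
  · simpa only [dotProduct, relDev, ← sq] using hball

end OrderedField

/-- Theorem 3 (L∞ constraint): the clipped solution
`π*_i = q_i · min{1 + λ A_i, 1 + ε}` for `A_i ≥ 0`,
`π*_i = q_i · max{1 + λ A_i, 1 − ε}` for `A_i < 0`,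
with the aggregate quadratic constraint binding, is optimal for the
L∞-constrained problem. -/
theorem spu_Linf_optimal
    (m : ℕ) (hm : 1 ≤ m)
    (A q : Fin m → ℝ) (hq : ∀ i, 0 < q i)
    (ε δ : ℝ) (hε : 0 < ε) (hδ : 0 < δ)
    (lam : ℝ) (hlam : 0 < lam)
    (pistar : Fin m → ℝ)
    (hpistar : ∀ i, pistar i =
      if 0 ≤ A i then q i * min (1 + lam * A i) (1 + ε)
      else q i * max (1 + lam * A i) (1 - ε))
    (hbinding : ∑ i, ((pistar i - q i) / q i) ^ 2 = δ) :
    ∀ pol : Fin m → ℝ,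
      (∀ i, |pol i - q i| / q i ≤ ε) →
      (∑ i, ((pol i - q i) / q i) ^ 2 ≤ δ) →
      ∑ i, A i * pol i / q i ≤ ∑ i, A i * pistar i / q i :=
  fun _ hpol hsum =>
    spu_Linf_optimal_general hq hlam hpistar hpol (hsum.trans_eq hbinding.symm)
end

section
/- Let μ > 0 and κ > max_a A(a), and suppose π*(a) = q(a) · μ / (κ − A(a)) defines a probability distribution on 𝒜 (i.e. Σ_a π*(a) = 1). Then π* maximizes the reverse-KL Lagrangian: for every probability distribution p on 𝒜 with p(a) > 0 for all a, Σ_a p(a) A(a) − μ · KL(q ‖ p) ≤ Σ_a π*(a) A(a) − μ · KL(q ‖ π*). -/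
/- The distribution `pistar` satisfies the first-order condition `pistar (κ - Adv) = μ q` of the
concave Lagrangian, with `κ` the multiplier of the mass constraint. Multiplying the tangent line
inequality `pistar - p ≤ pistar log (pistar / p)` by `κ - Adv` turns its right-hand side into
`μ q log (pistar / p)`, the pointwise difference of the two divergence terms. After integration the
multiplier drops out, because `p` and `pistar` have the same mass. -/

open MeasureTheory

/-- The Kullback–Leibler divergence `∫ f log (f / g) dν` of the measures with densities `f` and `g`
with respect to `ν`. As a Bochner integral it is meaningful only when the integrand is integrable
and `g` vanishes at almost no point where `f` does not. -/
noncomputable def densityKL {X : Type*} [MeasurableSpace X] (ν : Measure X) (f g : X → ℝ) : ℝ :=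
  ∫ x, f x * Real.log (f x / g x) ∂ν

/-- The integrand at one point of the Lagrangian `∫ p Adv dν - μ KL(q ‖ p) - κ ∫ p dν` in which the
mass constraint is relaxed with multiplier `κ`. -/
noncomputable def lagrangianIntegrand (q Adv μ κ p : ℝ) : ℝ :=
  p * Adv - μ * (q * Real.log (q / p)) - κ * p

section Pointwise

variable {a b c q p r Adv μ κ : ℝ}

theorem sub_le_mul_log_div (ha : 0 ≤ a) (hb : 0 ≤ b) (hab : a ≠ 0 → b ≠ 0) :
    a - b ≤ a * Real.log (a / b) := by
  obtain rfl | ha' := ha.eq_or_lt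
  · simpa using hb
  have hb' : 0 < b := hb.lt_of_ne' (hab ha'.ne')
  calc a - b = a * (1 - (a / b)⁻¹) := by field_simp
    _ ≤ a * Real.log (a / b) := by
      gcongr
      exact Real.one_sub_inv_le_log_of_pos (div_pos ha' hb')

theorem mul_log_div_sub_mul_log_div (hb : a ≠ 0 → b ≠ 0) (hc : a ≠ 0 → c ≠ 0) :
    a * Real.log (a / b) - a * Real.log (a / c) = a * Real.log (c / b) := by
  obtain rfl | ha := eq_or_ne a 0
  · simp
  rw [Real.log_div ha (hb ha), Real.log_div ha (hc ha), Real.log_div (hc ha) (hb ha)]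
  ring

theorem nonneg_of_stationary (hμ : 0 < μ) (hr : 0 ≤ r) (hAdv : Adv ≤ κ)
    (hstat : r * (κ - Adv) = μ * q) : 0 ≤ q :=
  nonneg_of_mul_nonneg_right (hstat ▸ mul_nonneg hr (sub_nonneg.mpr hAdv)) hμ

theorem ne_zero_of_stationary (hμ : μ ≠ 0) (hstat : r * (κ - Adv) = μ * q) (hq : q ≠ 0) : r ≠ 0 :=
  left_ne_zero_of_mul (hstat ▸ mul_ne_zero hμ hq)

theorem lagrangianIntegrand_le_of_stationary (hμ : μ ≠ 0) (hp : 0 ≤ p) (hqp : q ≠ 0 → p ≠ 0)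
    (hr : 0 ≤ r) (hAdv : Adv ≤ κ) (hstat : r * (κ - Adv) = μ * q) :
    lagrangianIntegrand q Adv μ κ p ≤ lagrangianIntegrand q Adv μ κ r := by
  have hqr : q ≠ 0 → r ≠ 0 := ne_zero_of_stationary hμ hstat
  have hgap : 0 ≤ κ - Adv := sub_nonneg.mpr hAdv
  have tangent : (κ - Adv) * (r - p) ≤ μ * (q * Real.log (r / p)) := by
    obtain rfl | hq := eq_or_ne q 0
    · linarith [mul_nonneg hgap hp]
    calc (κ - Adv) * (r - p) ≤ (κ - Adv) * (r * Real.log (r / p)) := by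
          gcongr
          exact sub_le_mul_log_div hr hp fun _ ↦ hqp hq
      _ = r * (κ - Adv) * Real.log (r / p) := by ring
      _ = μ * (q * Real.log (r / p)) := by rw [hstat, mul_assoc]
  rw [← mul_log_div_sub_mul_log_div hqp hqr] at tangent
  unfold lagrangianIntegrand
  linarith

end Pointwise

section Integral

variable {X : Type*} [MeasurableSpace X] {ν : Measure X} {q Adv p pistar : X → ℝ} {μ κ : ℝ}

/-- `p` is the density of a finite measure that dominates `q` and at which both the expectation of
`Adv` and the reverse divergence from `q` are finite. The total mass is not prescribed. -/
structure IsReverseKLFeasible (ν : Measure X) (q Adv p : X → ℝ) : Prop where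
  nonneg : ∀ᵐ x ∂ν, 0 ≤ p x
  ne_zero : ∀ᵐ x ∂ν, q x ≠ 0 → p x ≠ 0
  integrable : Integrable p ν
  integrable_mul : Integrable (fun x ↦ p x * Adv x) ν
  integrable_mul_log_div : Integrable (fun x ↦ q x * Real.log (q x / p x)) ν

/-- The Karush–Kuhn–Tucker conditions with multiplier `κ` for maximizing `∫ p Adv - μ KL(q ‖ p)`
at fixed mass. Where `Adv < κ`, stationarity reads `pistar = q μ / (κ - Adv)`; the product form also
allows `pistar` to charge the set `Adv = κ`, on which `q` vanishes. -/
structure IsReverseKLStationary (ν : Measure X) (q Adv : X → ℝ) (μ κ : ℝ) (pistar : X → ℝ) :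
    Prop where
  nonneg : ∀ᵐ x ∂ν, 0 ≤ pistar x
  integrable : Integrable pistar ν
  le_multiplier : ∀ᵐ x ∂ν, Adv x ≤ κ
  mul_sub_eq : ∀ᵐ x ∂ν, pistar x * (κ - Adv x) = μ * q x

namespace IsReverseKLFeasible

theorem integrable_mul_sub (hp : IsReverseKLFeasible ν q Adv p) :
    Integrable (fun x ↦ p x * Adv x - μ * (q x * Real.log (q x / p x))) ν :=
  hp.integrable_mul.sub (hp.integrable_mul_log_div.const_mul μ)

theorem integrable_lagrangianIntegrand (hp : IsReverseKLFeasible ν q Adv p) :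
    Integrable (fun x ↦ lagrangianIntegrand (q x) (Adv x) μ κ (p x)) ν :=
  hp.integrable_mul_sub.sub (hp.integrable.const_mul κ)

theorem integral_lagrangianIntegrand (hp : IsReverseKLFeasible ν q Adv p) :
    ∫ x, lagrangianIntegrand (q x) (Adv x) μ κ (p x) ∂ν =
      ∫ x, p x * Adv x ∂ν - μ * densityKL ν q p - κ * ∫ x, p x ∂ν := by
  unfold lagrangianIntegrand densityKL
  rw [integral_sub hp.integrable_mul_sub (hp.integrable.const_mul κ),
    integral_sub hp.integrable_mul (hp.integrable_mul_log_div.const_mul μ),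
    integral_const_mul, integral_const_mul]

end IsReverseKLFeasible

namespace IsReverseKLStationary

theorem lagrangianIntegrand_le (hpistar : IsReverseKLStationary ν q Adv μ κ pistar) (hμ : μ ≠ 0)
    (hp : IsReverseKLFeasible ν q Adv p) :
    ∀ᵐ x ∂ν, lagrangianIntegrand (q x) (Adv x) μ κ (p x) ≤
      lagrangianIntegrand (q x) (Adv x) μ κ (pistar x) := by
  filter_upwards [hp.nonneg, hp.ne_zero, hpistar.nonneg, hpistar.le_multiplier,
    hpistar.mul_sub_eq] with x hpx hqpx hpistarx hAdvx hstatx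
  exact lagrangianIntegrand_le_of_stationary hμ hpx hqpx hpistarx hAdvx hstatx

theorem integrable_mul (hpistar : IsReverseKLStationary ν q Adv μ κ pistar)
    (hq : Integrable q ν) : Integrable (fun x ↦ pistar x * Adv x) ν := by
  refine ((hpistar.integrable.const_mul κ).sub (hq.const_mul μ)).congr ?_
  filter_upwards [hpistar.mul_sub_eq] with x hx
  simp only [Pi.sub_apply]
  linarith

theorem integrable_mul_log_div (hpistar : IsReverseKLStationary ν q Adv μ κ pistar) (hμ : 0 < μ)
    (hq : Integrable q ν) (hp : IsReverseKLFeasible ν q Adv p) :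
    Integrable (fun x ↦ q x * Real.log (q x / pistar x)) ν := by
  have meas : AEStronglyMeasurable (fun x ↦ q x * Real.log (q x / pistar x)) ν :=
    (hq.aemeasurable.mul
      (hq.aemeasurable.div hpistar.integrable.aemeasurable).log).aestronglyMeasurable
  have upper_integrable : Integrable (fun x ↦ (pistar x * Adv x - κ * pistar x -
      lagrangianIntegrand (q x) (Adv x) μ κ (p x)) / μ) ν :=
    (((hpistar.integrable_mul hq).sub (hpistar.integrable.const_mul κ)).sub
      hp.integrable_lagrangianIntegrand).div_const μ
  -- The tangent line bounds the integrand below by `q - pistar`; solving the pointwise Lagrangian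
  -- inequality for it gives an upper bound in terms of the competitor `p`.
  refine integrable_of_le_of_le meas ?_ ?_ (hq.sub hpistar.integrable) upper_integrable
  · filter_upwards [hpistar.nonneg, hpistar.le_multiplier, hpistar.mul_sub_eq]
      with x hpistarx hAdvx hstatx
    exact sub_le_mul_log_div (nonneg_of_stationary hμ hpistarx hAdvx hstatx) hpistarx
      (ne_zero_of_stationary hμ.ne' hstatx)
  · filter_upwards [hpistar.lagrangianIntegrand_le hμ.ne' hp] with x hx
    rw [le_div_iff₀' hμ]
    unfold lagrangianIntegrand at hx ⊢
    linarith

theorem isReverseKLFeasible (hpistar : IsReverseKLStationary ν q Adv μ κ pistar) (hμ : 0 < μ)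
    (hq : Integrable q ν) (hp : IsReverseKLFeasible ν q Adv p) :
    IsReverseKLFeasible ν q Adv pistar where
  nonneg := hpistar.nonneg
  ne_zero := hpistar.mul_sub_eq.mono fun _ ↦ ne_zero_of_stationary hμ.ne'
  integrable := hpistar.integrable
  integrable_mul := hpistar.integrable_mul hq
  integrable_mul_log_div := hpistar.integrable_mul_log_div hμ hq hp

end IsReverseKLStationary

theorem reverse_KL_lagrangian_optimal_general (hμ : 0 < μ) (hq : Integrable q ν)
    (hpistar : IsReverseKLStationary ν q Adv μ κ pistar) (hp : IsReverseKLFeasible ν q Adv p)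
    (hmass : ∫ x, p x ∂ν = ∫ x, pistar x ∂ν) :
    ∫ x, p x * Adv x ∂ν - μ * densityKL ν q p ≤
      ∫ x, pistar x * Adv x ∂ν - μ * densityKL ν q pistar := by
  have hpistar_feasible := hpistar.isReverseKLFeasible hμ hq hp
  have integrated := integral_mono_ae hp.integrable_lagrangianIntegrand
    hpistar_feasible.integrable_lagrangianIntegrand (hpistar.lagrangianIntegrand_le hμ.ne' hp)
  rw [hp.integral_lagrangianIntegrand, hpistar_feasible.integral_lagrangianIntegrand,
    hmass] at integrated
  exact (sub_le_sub_iff_right _).mp integrated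

end Integral

section Finite

variable {X : Type*} [MeasurableSpace X] [MeasurableSingletonClass X] {q Adv p pistar : X → ℝ}
  {μ κ : ℝ}

theorem densityKL_count [Fintype X] (f g : X → ℝ) : densityKL .count f g = KL f g :=
  integral_count _

theorem isReverseKLFeasible_count [Finite X] (hp : ∀ x, 0 < p x) :
    IsReverseKLFeasible .count q Adv p where
  nonneg := .of_forall fun x ↦ (hp x).le
  ne_zero := .of_forall fun x _ ↦ (hp x).ne'
  integrable := .of_finite
  integrable_mul := .of_finite
  integrable_mul_log_div := .of_finite

theorem isReverseKLStationary_count [Finite X] (hq : ∀ x, 0 ≤ q x) (hμ : 0 ≤ μ)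
    (hκ : ∀ x, Adv x < κ) (hpistar : ∀ x, pistar x = q x * μ / (κ - Adv x)) :
    IsReverseKLStationary .count q Adv μ κ pistar where
  nonneg := .of_forall fun x ↦ by
    rw [hpistar]
    exact div_nonneg (mul_nonneg (hq x) hμ) (sub_nonneg.mpr (hκ x).le)
  integrable := .of_finite
  le_multiplier := .of_forall fun x ↦ (hκ x).le
  mul_sub_eq := .of_forall fun x ↦ by
    rw [hpistar, div_mul_cancel₀ _ (sub_pos.mpr (hκ x)).ne', mul_comm]

end Finite

/-- Reverse-KL Lagrangian maximization: `π*(a) = q(a) · μ / (κ − A(a))` maximizes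
`p ↦ ∑_a p(a) A(a) − μ · KL(q ‖ p)` over everywhere-positive distributions `p`. -/
theorem reverse_KL_lagrangian_optimal
    {A : Type*} [Fintype A] [Nonempty A]
    (q : A → ℝ) (hqpos : ∀ a, 0 < q a) (hqsum : ∑ a, q a = 1)
    (Adv : A → ℝ) (μ κ : ℝ) (hμ : 0 < μ) (hκ : ∀ a, Adv a < κ)
    (pistar : A → ℝ)
    (hpistar : ∀ a, pistar a = q a * μ / (κ - Adv a))
    (hpistar_sum : ∑ a, pistar a = 1) :
    ∀ p : A → ℝ, (∀ a, 0 < p a) → ∑ a, p a = 1 →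
      ∑ a, p a * Adv a - μ * KL q p ≤ ∑ a, pistar a * Adv a - μ * KL q pistar := by
  intro p hp hpsum
  let : MeasurableSpace A := ⊤
  simpa only [densityKL_count, integral_count] using
    reverse_KL_lagrangian_optimal_general (ν := .count) hμ .of_finite
      (isReverseKLStationary_count (fun a ↦ (hqpos a).le) hμ.le hκ hpistar)
      (isReverseKLFeasible_count hp) (by simp only [integral_count, hpsum, hpistar_sum])
end

section
/- Let λ₀ > 0 and κ > max_a A(a), suppose π*(a) = q(a) · λ₀ / (κ − A(a)) defines a probability distribution on 𝒜, and suppose the cross-entropy constraint is binding: −Σ_a q(a) log π*(a) = ε'. Then π* is optimal for the decomposed backward-KL problem: for every probability distribution p on 𝒜 with p(a) > 0 for all a and −Σ_a q(a) log p(a) ≤ ε', one has Σ_a p(a) A(a) ≤ Σ_a π*(a) A(a). -/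
/-!
The stationarity condition `(κ - A) π = λ q` makes `π` maximise the Lagrangian
`∫ p A + λ ∫ q log p - κ ∫ p`: multiplying the tangent-line bound
`π (log p - log π) ≤ p - π` for the concave function `log` by `κ - A ≥ 0` gives
`λ q (log p - log π) ≤ (κ - A) (p - π)` pointwise. Once integrated, the left side is nonnegative
by the cross-entropy constraint, and the `κ`-terms on the right cancel because `p` and `π` have
the same mass.
-/

open MeasureTheory

theorem mul_log_sub_log_le_sub {x y : ℝ} (hx : 0 < x) (hy : 0 ≤ y) :
    y * (Real.log x - Real.log y) ≤ x - y := by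
  rcases hy.eq_or_lt with rfl | hy
  · simpa using hx.le
  calc
    y * (Real.log x - Real.log y) = y * Real.log (x / y) := by
      rw [Real.log_div hx.ne' hy.ne']
    _ ≤ y * (x / y - 1) := by
      gcongr
      exact Real.log_le_sub_one_of_pos (div_pos hx hy)
    _ = x - y := by field_simp

theorem mul_log_sub_log_le_mul_sub_of_stationary {w lam q x y : ℝ} (hw : 0 ≤ w) (hx : 0 ≤ x)
    (hy : 0 ≤ y) (hxq : x = 0 → q = 0) (hstat : w * y = lam * q) :
    lam * (q * Real.log x - q * Real.log y) ≤ w * (x - y) := by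
  rcases hx.eq_or_lt with rfl | hx
  · have hq : q = 0 := hxq rfl
    have hwy : w * y = 0 := by rw [hstat, hq, mul_zero]
    simp only [hq, zero_mul, sub_zero, mul_zero, mul_sub, hwy, le_refl]
  calc
    lam * (q * Real.log x - q * Real.log y) = lam * q * (Real.log x - Real.log y) := by ring
    _ = w * (y * (Real.log x - Real.log y)) := by rw [← hstat, mul_assoc]
    _ ≤ w * (x - y) := by gcongr; exact mul_log_sub_log_le_sub hx hy

/-- In product form the stationarity condition also covers points outside the support of `q` at
which `Adv = κ`; there `pistar` may carry mass. -/
theorem decomposed_backward_KL_optimal_general {Ω : Type*} [MeasurableSpace Ω] {μ : Measure Ω}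
    {q Adv pistar p : Ω → ℝ} {lam₀ κ : ℝ} (hlam₀ : 0 ≤ lam₀) (hκ : ∀ᵐ a ∂μ, Adv a ≤ κ)
    (hpistar_nonneg : ∀ᵐ a ∂μ, 0 ≤ pistar a)
    (hpistar : ∀ᵐ a ∂μ, (κ - Adv a) * pistar a = lam₀ * q a)
    (hp_nonneg : ∀ᵐ a ∂μ, 0 ≤ p a) (hpq : ∀ᵐ a ∂μ, p a = 0 → q a = 0)
    (hpistar_int : Integrable pistar μ) (hp_int : Integrable p μ)
    (hpistarAdv_int : Integrable (fun a ↦ pistar a * Adv a) μ)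
    (hpAdv_int : Integrable (fun a ↦ p a * Adv a) μ)
    (hpistarlog_int : Integrable (fun a ↦ q a * Real.log (pistar a)) μ)
    (hplog_int : Integrable (fun a ↦ q a * Real.log (p a)) μ)
    (hmass : ∫ a, p a ∂μ = ∫ a, pistar a ∂μ)
    (hcross : -∫ a, q a * Real.log (p a) ∂μ ≤ -∫ a, q a * Real.log (pistar a) ∂μ) :
    ∫ a, p a * Adv a ∂μ ≤ ∫ a, pistar a * Adv a ∂μ := by
  have hgain_int : Integrable (fun a ↦ pistar a * Adv a - p a * Adv a) μ :=
    hpistarAdv_int.sub hpAdv_int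
  have hmass_int : Integrable (fun a ↦ κ * (p a - pistar a)) μ :=
    (hp_int.sub hpistar_int).const_mul κ
  have hpointwise : ∀ᵐ a ∂μ, lam₀ * (q a * Real.log (p a) - q a * Real.log (pistar a)) ≤
      κ * (p a - pistar a) + (pistar a * Adv a - p a * Adv a) := by
    filter_upwards [hκ, hpistar_nonneg, hpistar, hp_nonneg, hpq] with a hκ hπ hstat hp hpq
    linarith [mul_log_sub_log_le_mul_sub_of_stationary (sub_nonneg.2 hκ) hp hπ hpq hstat]
  rw [← sub_nonneg]
  calc
    0 ≤ lam₀ * (∫ a, q a * Real.log (p a) ∂μ - ∫ a, q a * Real.log (pistar a) ∂μ) :=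
      mul_nonneg hlam₀ (sub_nonneg.2 (neg_le_neg_iff.1 hcross))
    _ = ∫ a, lam₀ * (q a * Real.log (p a) - q a * Real.log (pistar a)) ∂μ := by
      rw [integral_const_mul, integral_sub hplog_int hpistarlog_int]
    _ ≤ ∫ a, (κ * (p a - pistar a) + (pistar a * Adv a - p a * Adv a)) ∂μ :=
      integral_mono_ae ((hplog_int.sub hpistarlog_int).const_mul lam₀)
        (hmass_int.add hgain_int) hpointwise
    _ = ∫ a, pistar a * Adv a ∂μ - ∫ a, p a * Adv a ∂μ := by
      rw [integral_add hmass_int hgain_int, integral_const_mul, integral_sub hp_int hpistar_int,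
        integral_sub hpistarAdv_int hpAdv_int, hmass, sub_self, mul_zero, zero_add]

/-- Decomposed backward-KL problem: `π*(a) = q(a) · λ₀ / (κ − A(a))` with the
cross-entropy constraint binding (`−∑_a q(a) log π*(a) = ε'`) is optimal:
every everywhere-positive distribution `p` with `−∑_a q(a) log p(a) ≤ ε'`
satisfies `∑_a p(a) A(a) ≤ ∑_a π*(a) A(a)`. -/
theorem decomposed_backward_KL_optimal
    {A : Type*} [Fintype A] [Nonempty A]
    (q : A → ℝ) (hqpos : ∀ a, 0 < q a) (hqsum : ∑ a, q a = 1)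
    (Adv : A → ℝ) (ε' : ℝ)
    (lam₀ κ : ℝ) (hlam₀ : 0 < lam₀) (hκ : ∀ a, Adv a < κ)
    (pistar : A → ℝ)
    (hpistar : ∀ a, pistar a = q a * lam₀ / (κ - Adv a))
    (hpistar_sum : ∑ a, pistar a = 1)
    (hbinding : -∑ a, q a * Real.log (pistar a) = ε') :
    ∀ p : A → ℝ, (∀ a, 0 < p a) → ∑ a, p a = 1 →
      (-∑ a, q a * Real.log (p a) ≤ ε') →
      ∑ a, p a * Adv a ≤ ∑ a, pistar a * Adv a := by
  intro p hp hpsum hcross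
  let _ : MeasurableSpace A := ⊤
  have hpistar_nonneg (a : A) : 0 ≤ pistar a := by
    rw [hpistar]
    exact div_nonneg (mul_pos (hqpos a) hlam₀).le (sub_pos.2 (hκ a)).le
  have hstationary (a : A) : (κ - Adv a) * pistar a = lam₀ * q a := by
    rw [hpistar, mul_div_cancel₀ _ (sub_pos.2 (hκ a)).ne', mul_comm]
  simpa only [integral_count] using
    decomposed_backward_KL_optimal_general (μ := .count) (q := q) hlam₀.le
      (.of_forall fun a ↦ (hκ a).le) (.of_forall hpistar_nonneg) (.of_forall hstationary)
      (.of_forall fun a ↦ (hp a).le) (.of_forall fun a h ↦ absurd h (hp a).ne')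
      .of_finite .of_finite .of_finite .of_finite .of_finite .of_finite
      (by simp only [integral_count, hpsum, hpistar_sum])
      (by simpa only [integral_count, hbinding] using hcross)
end
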